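/- (One direction of the main theorem.) Fix an orientation ε of the type A_n quiver. If (w,r) ∈ ℝ^n × (ℝ_{>0})^n is totally stable, then μ_{w,r}(X_0) > μ_{w,r}(X_1) > ⋯ > μ_{w,r}(X_{x(n)}) and μ_{w,r}(Y_0) < μ_{w,r}(Y_1) < ⋯ < μ_{w,r}(Y_{y(n)}). -/

import Mathlib

/-!
Consecutive level sets of the coordinate `x` are adjacent intervals, and the arrow joining
`X_k` to `X_{k+1}` is the `→` arrow that increases `x`. Hence `X_{k+1}` is a nonempty proper
successor-closed subset of the interval `X_k ∪ X_{k+1}`, and total stability gives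
`μ(X_{k+1}) < μ(X_k ∪ X_{k+1})`. Since the slope of a disjoint union is a weighted mean of the
slopes of its parts (`muSlope_lt_of_lt_union`), this means `μ(X_{k+1}) < μ(X_k)`. For `y` the
joining arrow points backwards, so `Y_l` is the successor-closed part of `Y_l ∪ Y_{l+1}` and
the inequality is reversed.
-/

open Finset

/-- The muSlope `μ_{w,r}(S) = (Σ_{z∈S} w z)/(Σ_{z∈S} r z)` of a subset of vertices. -/
noncomputable def muSlope {n : ℕ} (w r : Fin n → ℝ) (S : Finset (Fin n)) : ℝ :=
  (∑ z ∈ S, w z) / (∑ z ∈ S, r z)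

/-- `T` is an interval of vertices. -/
def IsInterval {n : ℕ} (T : Finset (Fin n)) : Prop :=
  ∃ a b : Fin n, T = Finset.Icc a b

/-- `S` is successor-closed in `T` with respect to the orientation `ε`
(`ε i = true` means there is an arrow `i → i+1`, `ε i = false` an arrow `i+1 → i`). -/
def SuccClosed {n : ℕ} (ε : ℕ → Bool) (T S : Finset (Fin n)) : Prop :=
  ∀ i j : Fin n, i ∈ T → j ∈ T → (j : ℕ) = (i : ℕ) + 1 →
    ((ε (i : ℕ) = true → i ∈ S → j ∈ S) ∧ (ε (i : ℕ) = false → j ∈ S → i ∈ S))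

/-- `(w, r)` is a total stability condition for the type `A_n` quiver with orientation `ε`. -/
def TotallyStable {n : ℕ} (ε : ℕ → Bool) (w r : Fin n → ℝ) : Prop :=
  ∀ T S : Finset (Fin n), IsInterval T → S ⊆ T → S.Nonempty → S ≠ T →
    SuccClosed ε T S → muSlope w r S < muSlope w r T

/-- `x`-coordinate of the vertex with `m` vertices before it: number of `→` arrows among
the first `m` arrows. -/
def xc (ε : ℕ → Bool) (m : ℕ) : ℕ := ((Finset.range m).filter (fun i => ε i = true)).card

/-- `y`-coordinate: number of `←` arrows among the first `m` arrows. -/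
def yc (ε : ℕ → Bool) (m : ℕ) : ℕ := ((Finset.range m).filter (fun i => ε i = false)).card

/-- `X_k`: the set of vertices with `x`-coordinate `k`. -/
def Xset {n : ℕ} (ε : ℕ → Bool) (k : ℕ) : Finset (Fin n) :=
  Finset.univ.filter (fun z => xc ε (z : ℕ) = k)

/-- `Y_k`: the set of vertices with `y`-coordinate `k`. -/
def Yset {n : ℕ} (ε : ℕ → Bool) (k : ℕ) : Finset (Fin n) :=
  Finset.univ.filter (fun z => yc ε (z : ℕ) = k)

/-- `X̃_k`: the set of vertices with `x`-coordinate at least `k`. -/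
def Xtil {n : ℕ} (ε : ℕ → Bool) (k : ℕ) : Finset (Fin n) :=
  Finset.univ.filter (fun z => k ≤ xc ε (z : ℕ))

/-- `Ỹ_k`: the set of vertices with `y`-coordinate at least `k`. -/
def Ytil {n : ℕ} (ε : ℕ → Bool) (k : ℕ) : Finset (Fin n) :=
  Finset.univ.filter (fun z => k ≤ yc ε (z : ℕ))

lemma xc_succ (ε : ℕ → Bool) (m : ℕ) :
    xc ε (m + 1) = xc ε m + if ε m = true then 1 else 0 := by
  unfold xc
  rw [Finset.range_add_one, Finset.filter_insert]
  split_ifs <;> simp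

lemma yc_succ (ε : ℕ → Bool) (m : ℕ) :
    yc ε (m + 1) = yc ε m + if ε m = false then 1 else 0 := by
  unfold yc
  rw [Finset.range_add_one, Finset.filter_insert]
  split_ifs <;> simp

lemma xc_mono (ε : ℕ → Bool) : Monotone (xc ε) :=
  monotone_nat_of_le_succ fun m => by rw [xc_succ]; omega

lemma yc_mono (ε : ℕ → Bool) : Monotone (yc ε) :=
  monotone_nat_of_le_succ fun m => by rw [yc_succ]; omega

/-- Discrete intermediate value property: a sequence starting at `0` with steps at most `1`
takes every value up to `f m` on `{0, …, m}`. -/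
lemma exists_le_eq_of_step {f : ℕ → ℕ} (h0 : f 0 = 0) (hs : ∀ m, f (m + 1) ≤ f m + 1)
    {k m : ℕ} (hk : k ≤ f m) : ∃ i ≤ m, f i = k := by
  induction m with
  | zero => exact ⟨0, le_rfl, by omega⟩
  | succ m ih =>
    by_cases hkm : k ≤ f m
    · obtain ⟨i, hi, e⟩ := ih hkm
      exact ⟨i, by omega, e⟩
    · have := hs m
      exact ⟨m + 1, le_rfl, by omega⟩

lemma level_nonempty {n : ℕ} (hn : 0 < n) {f : ℕ → ℕ} (h0 : f 0 = 0)
    (hs : ∀ m, f (m + 1) ≤ f m + 1) {k : ℕ} (hk : k ≤ f (n - 1)) :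
    (Finset.univ.filter (fun z : Fin n => f z = k)).Nonempty := by
  obtain ⟨i, hi, e⟩ := exists_le_eq_of_step h0 hs hk
  exact ⟨⟨i, by omega⟩, by simpa using e⟩

/-- Two consecutive level sets of a monotone function together form an interval, being its
preimage of `{k, k + 1}`. -/
lemma isInterval_level_union {n : ℕ} {f : ℕ → ℕ} (hf : Monotone f) {k : ℕ}
    (hne : (Finset.univ.filter (fun z : Fin n => f z = k)).Nonempty) :
    IsInterval (Finset.univ.filter (fun z : Fin n => f z = k) ∪
      Finset.univ.filter (fun z : Fin n => f z = k + 1)) := by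
  set T := Finset.univ.filter (fun z : Fin n => f z = k) ∪
    Finset.univ.filter (fun z : Fin n => f z = k + 1) with hT
  have hTne : T.Nonempty := hne.mono Finset.subset_union_left
  have mem : ∀ z : Fin n, z ∈ T ↔ f z = k ∨ f z = k + 1 := by simp [hT]
  refine ⟨T.min' hTne, T.max' hTne, ?_⟩
  ext z
  rw [Finset.mem_Icc]
  refine ⟨fun hz => ⟨T.min'_le z hz, T.le_max' z hz⟩, fun ⟨h1, h2⟩ => ?_⟩
  have a := (mem _).1 (T.min'_mem hTne)
  have b := (mem _).1 (T.max'_mem hTne)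
  have c : f (T.min' hTne) ≤ f z := hf h1
  have d : f z ≤ f (T.max' hTne) := hf h2
  rw [mem]
  omega

lemma level_disjoint {n : ℕ} {f : ℕ → ℕ} {k l : ℕ} (hkl : k ≠ l) :
    Disjoint (Finset.univ.filter (fun z : Fin n => f z = k))
      (Finset.univ.filter (fun z : Fin n => f z = l)) := by
  rw [Finset.disjoint_filter]
  intro z _ h1 h2
  exact hkl (h1.symm.trans h2)

/-- Mediant inequality: a part of smaller slope than the disjoint union has smaller slope than
the complementary part. -/
lemma muSlope_lt_of_lt_union {n : ℕ} {w r : Fin n → ℝ} (hr : ∀ i, 0 < r i)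
    {S S' : Finset (Fin n)} (hS : S.Nonempty) (hS' : S'.Nonempty) (hd : Disjoint S S')
    (h : muSlope w r S < muSlope w r (S ∪ S')) : muSlope w r S < muSlope w r S' := by
  unfold muSlope at *
  have p := Finset.sum_pos (fun i _ => hr i) hS
  have p' := Finset.sum_pos (fun i _ => hr i) hS'
  rw [Finset.sum_union hd, Finset.sum_union hd, div_lt_div_iff₀ p (by positivity)] at h
  rw [div_lt_div_iff₀ p p']
  linarith

lemma TotallyStable.muSlope_lt {n : ℕ} {ε : ℕ → Bool} {w r : Fin n → ℝ}
    (h : TotallyStable ε w r) (hr : ∀ i, 0 < r i) {S S' : Finset (Fin n)} (hS : S.Nonempty)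
    (hS' : S'.Nonempty) (hd : Disjoint S S') (hI : IsInterval (S ∪ S'))
    (hc : SuccClosed ε (S ∪ S') S) : muSlope w r S < muSlope w r S' := by
  refine muSlope_lt_of_lt_union hr hS hS' hd
    (h _ _ hI Finset.subset_union_left hS (fun e => ?_) hc)
  obtain ⟨z, hz⟩ := hS'
  exact Finset.disjoint_left.1 hd (e ▸ Finset.mem_union_right _ hz) hz

/-- one direction of the main theorem: if `(w,r)` is totally stable then
`μ(X_0) > μ(X_1) > ⋯ > μ(X_{x(n)})` and `μ(Y_0) < μ(Y_1) < ⋯ < μ(Y_{y(n)})`. -/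
theorem chain_inequalities_of_totally_stable (n : ℕ) (hn : 0 < n) (ε : ℕ → Bool)
    (w r : Fin n → ℝ) (hr : ∀ i, 0 < r i) (h : TotallyStable ε w r) :
    (∀ k, k < xc ε (n - 1) →
      muSlope w r (Xset ε (k + 1)) < muSlope w r (Xset ε k)) ∧
    (∀ l, l < yc ε (n - 1) →
      muSlope w r (Yset ε l) < muSlope w r (Yset ε (l + 1))) := by
  have hx0 : xc ε 0 = 0 := by simp [xc]
  have hy0 : yc ε 0 = 0 := by simp [yc]
  have hxs : ∀ m, xc ε (m + 1) ≤ xc ε m + 1 := fun m => by rw [xc_succ]; split_ifs <;> omega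
  have hys : ∀ m, yc ε (m + 1) ≤ yc ε m + 1 := fun m => by rw [yc_succ]; split_ifs <;> omega
  refine ⟨fun k hk => ?_, fun l hl => ?_⟩
  · have hne := level_nonempty hn hx0 hxs hk.le
    refine h.muSlope_lt hr (level_nonempty hn hx0 hxs hk) hne (level_disjoint (by omega)) ?_ ?_
    · rw [Finset.union_comm]
      exact isInterval_level_union (xc_mono ε) hne
    · intro i j hi hj hij
      have e := xc_succ ε i
      rw [← hij] at e
      simp only [Xset, Finset.mem_union, Finset.mem_filter, Finset.mem_univ, true_and] at hi hj ⊢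
      constructor <;> intro hε hm <;> simp only [hε] at e <;> simp at e <;> omega
  · have hne := level_nonempty hn hy0 hys hl.le
    refine h.muSlope_lt hr hne (level_nonempty hn hy0 hys hl) (level_disjoint (by omega))
      (isInterval_level_union (yc_mono ε) hne) ?_
    intro i j hi hj hij
    have e := yc_succ ε i
    rw [← hij] at e
    simp only [Yset, Finset.mem_union, Finset.mem_filter, Finset.mem_univ, true_and] at hi hj ⊢
    constructor <;> intro hε hm <;> simp only [hε] at e <;> simp at e <;> omega
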